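/- arXiv:2501.01654 — 2 statements merged into one kernel-verified Lean document; each statement's English description precedes it below -/
import Mathlib

section
/- If α_j is minuscule, then there exists a unique v_j ∈ W such that v_j(Π) = Π_j, where Π_j = {−α₀} ∪ (Π ∖ {α_j}). Moreover, for v ∈ W, the condition v(Π) = Π_j is equivalent to the conjunction: v({−α₀} ∪ Π) = {−α₀} ∪ Π and v(−α₀) = α_j. -/
/-! The existence and uniqueness of `v` express that the Weyl group acts simply transitively on
bases, once `Π_j` is known to be a base. Rewriting a root `∑ cᵢ αᵢ` in terms of `Π_j` gives the
coefficient `-c_j` at `-α₀` and `cᵢ - c_j mᵢ` at the other `αᵢ`; as `m_j = 1`, one has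
`c_j ∈ {-1, 0, 1}`, and maximality of `α₀` makes these coefficients constant in sign
(`IsHighestRoot.exists_simpleSystem`).

Transitivity (`SimpleSystem.exists_weyl`): let `x`, `y` be vectors having inner product one with all
members of the two bases. If `u` in the Weyl group maximizes `⟪u y, x⟫`, then `u y` lies in the open
chamber of the first base, so `u` maps the positive roots of the second base to those of the
first. A base is determined by its positive roots, because simple roots have height one
(`SimpleSystem.range_subset`).

Freeness (`SimpleSystem.eq_one`): the Weyl group is generated by simple reflections
(`SimpleSystem.exists_wordProd`), and the exchange condition (`SimpleSystem.exchange`) shortens any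
nonempty word whose product keeps all simple roots positive.

For the equivalence, if `v` maps `Π` to `Π_j`, it maps the highest root `α₀` of `Π` to that of
`Π_j`, which is `-α_j` (`IsHighestRoot.map_eq`). The rest is set theory in the extended base
`{-α₀} ∪ Π`, from which `Π` and `Π_j` arise by deleting `-α₀` and `α_j`. -/

open scoped RealInnerProductSpace

open scoped RealInnerProductSpace

/-- The reflection `s_a` in the hyperplane orthogonal to `a`. -/
noncomputable def reflMap {V : Type*} [NormedAddCommGroup V] [InnerProductSpace ℝ V]
    (a x : V) : V :=
  x - (2 * ⟪a, x⟫ / ⟪a, a⟫) • a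

/-- A reduced irreducible crystallographic root system in `V`. -/
structure IsRootSystem {V : Type*} [NormedAddCommGroup V] [InnerProductSpace ℝ V]
    (Φ : Set V) : Prop where
  finite : Φ.Finite
  spans : Submodule.span ℝ Φ = ⊤
  not_zero : (0 : V) ∉ Φ
  reduced : ∀ a ∈ Φ, ∀ t : ℝ, t • a ∈ Φ → t = 1 ∨ t = -1
  refl_mem : ∀ a ∈ Φ, ∀ b ∈ Φ, reflMap a b ∈ Φ
  crystallographic : ∀ a ∈ Φ, ∀ b ∈ Φ, ∃ k : ℤ, 2 * ⟪a, b⟫ / ⟪a, a⟫ = (k : ℝ)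
  irreducible : ¬ ∃ Φ₁ Φ₂ : Set V, Φ₁.Nonempty ∧ Φ₂.Nonempty ∧ Φ₁ ∪ Φ₂ = Φ ∧
    ∀ a ∈ Φ₁, ∀ b ∈ Φ₂, ⟪a, b⟫ = 0

/-- `α : Fin n → V` is a base (system of simple roots) of `Φ`. -/
structure IsBase {V : Type*} [NormedAddCommGroup V] [InnerProductSpace ℝ V]
    (Φ : Set V) {n : ℕ} (α : Fin n → V) : Prop where
  mem : ∀ i, α i ∈ Φ
  indep : LinearIndependent ℝ α
  spans : Submodule.span ℝ (Set.range α) = ⊤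
  int_comb : ∀ β ∈ Φ, ∃ c : Fin n → ℤ,
    β = ∑ i, (c i : ℝ) • α i ∧ ((∀ i, 0 ≤ c i) ∨ (∀ i, c i ≤ 0))

/-- `α₀ = ∑ mᵢ αᵢ` is the highest root of `Φ` w.r.t. the base `α`. -/
structure IsHighestRoot {V : Type*} [NormedAddCommGroup V] [InnerProductSpace ℝ V]
    (Φ : Set V) {n : ℕ} (α : Fin n → V) (m : Fin n → ℕ) (α₀ : V) : Prop where
  pos : ∀ i, 0 < m i
  mem : α₀ ∈ Φ
  eq : α₀ = ∑ i, (m i : ℝ) • α i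
  highest : ∀ β ∈ Φ, ∀ c : Fin n → ℤ, β = ∑ i, (c i : ℝ) • α i → ∀ i, c i ≤ (m i : ℤ)

/-- The Weyl group of `Φ`, generated by the reflections in the roots. -/
noncomputable def WeylGroup {V : Type*} [NormedAddCommGroup V] [InnerProductSpace ℝ V]
    (Φ : Set V) : Subgroup (V ≃ₗᵢ[ℝ] V) :=
  Subgroup.closure {w : V ≃ₗᵢ[ℝ] V | ∃ a ∈ Φ, ∀ x, w x = reflMap a x}

/-- The fundamental alcove. -/
def alcove {V : Type*} [NormedAddCommGroup V] [InnerProductSpace ℝ V]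
    {n : ℕ} (α : Fin n → V) (α₀ : V) : Set V :=
  {x | (∀ i, 0 ≤ ⟪α i, x⟫) ∧ ⟪α₀, x⟫ ≤ 1}

/-- The coweight lattice `P^∨`. -/
def coweightLattice {V : Type*} [NormedAddCommGroup V] [InnerProductSpace ℝ V]
    (Φ : Set V) : Set V :=
  {ω | ∀ a ∈ Φ, ∃ k : ℤ, ⟪ω, a⟫ = (k : ℝ)}

/-- The coroot lattice `Q^∨`: the `ℤ`-span of the coroots. -/
def corootLattice {V : Type*} [NormedAddCommGroup V] [InnerProductSpace ℝ V]
    (Φ : Set V) : Set V :=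
  (Submodule.span ℤ ((fun a : V => (2 / ⟪a, a⟫) • a) '' Φ) : Set V)

/-- The extended affine Weyl group `W_ext = {t_γ ∘ w : γ ∈ P^∨, w ∈ W}` inside `E(V)`. -/
noncomputable def extendedWeylGroup {V : Type*} [NormedAddCommGroup V] [InnerProductSpace ℝ V]
    (Φ : Set V) : Set (V ≃ᵃⁱ[ℝ] V) :=
  {ζ | ∃ γ ∈ coweightLattice Φ, ∃ w ∈ WeylGroup Φ, ∀ x, ζ x = w x + γ}

/-- The affine Weyl group `W_aff = {t_γ ∘ w : γ ∈ Q^∨, w ∈ W}` inside `E(V)`. -/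
noncomputable def affineWeylGroup {V : Type*} [NormedAddCommGroup V] [InnerProductSpace ℝ V]
    (Φ : Set V) : Set (V ≃ᵃⁱ[ℝ] V) :=
  {ζ | ∃ γ ∈ corootLattice Φ, ∃ w ∈ WeylGroup Φ, ∀ x, ζ x = w x + γ}

/-- The fundamental group `Ω`: the stabilizer of the alcove in `W_ext`. -/
noncomputable def fundGroup {V : Type*} [NormedAddCommGroup V] [InnerProductSpace ℝ V]
    (Φ : Set V) {n : ℕ} (α : Fin n → V) (α₀ : V) : Set (V ≃ᵃⁱ[ℝ] V) :=
  {ζ | ζ ∈ extendedWeylGroup Φ ∧ ζ '' alcove α α₀ = alcove α α₀}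

/-- The Komrakov–Premet polytope. -/
def kpPolytope {V : Type*} [NormedAddCommGroup V] [InnerProductSpace ℝ V]
    {n : ℕ} (α : Fin n → V) (m : Fin n → ℕ) (α₀ : V) : Set V :=
  {x ∈ alcove α α₀ | ∀ j, m j = 1 → ⟪α₀ + α j, x⟫ ≤ 1}

/-! ### Reflections and the Weyl group -/

section Aux

variable {V : Type*} [NormedAddCommGroup V] [InnerProductSpace ℝ V]

/-- The reflection `reflMap a`, bundled as a linear isometry. -/
noncomputable def reflIso (a : V) : V ≃ₗᵢ[ℝ] V := (Submodule.span ℝ {a})ᗮ.reflection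

lemma reflIso_apply (a x : V) : reflIso a x = reflMap a x := by
  have h := Submodule.reflection_singleton_apply (𝕜 := ℝ) a x
  rw [reflIso, Submodule.reflection_orthogonal_apply, h, reflMap, real_inner_self_eq_norm_sq,
    mul_div_assoc, mul_smul, two_smul ℝ, two_nsmul, neg_sub]
  rfl

lemma reflIso_mul_self (a : V) : reflIso a * reflIso a = 1 := by
  ext x
  rw [LinearIsometryEquiv.coe_mul, Function.comp_apply, reflIso, Submodule.reflection_reflection,
    LinearIsometryEquiv.coe_one, id_eq]

lemma reflIso_self (a : V) : reflIso a a = -a :=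
  Submodule.reflection_orthogonalComplement_singleton_eq_neg a

lemma reflIso_neg (a : V) : reflIso (-a) = reflIso a := by
  ext x
  simp [reflIso_apply, reflMap, neg_div]

lemma reflIso_map (u : V ≃ₗᵢ[ℝ] V) (a : V) : reflIso (u a) = u * reflIso a * u⁻¹ := by
  ext x
  have h : ⟪u a, x⟫ = ⟪a, u⁻¹ x⟫ := by
    rw [← u.inner_map_map a (u⁻¹ x)]
    exact congrArg _ (u.apply_symm_apply x).symm
  have hx : u (u⁻¹ x) = x := u.apply_symm_apply x
  simp only [LinearIsometryEquiv.coe_mul, Function.comp_apply, reflIso_apply, reflMap, map_sub,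
    map_smul, h, hx, u.inner_map_map]

variable {Φ : Set V}

lemma weylGroup_eq : WeylGroup Φ = Subgroup.closure (reflIso '' Φ) := by
  unfold WeylGroup
  congr 1
  ext w
  constructor
  · rintro ⟨a, ha, h⟩
    exact ⟨a, ha, by ext x; rw [reflIso_apply, h]⟩
  · rintro ⟨a, ha, rfl⟩
    exact ⟨a, ha, reflIso_apply a⟩

lemma reflIso_mem_weylGroup {a : V} (ha : a ∈ Φ) : reflIso a ∈ WeylGroup Φ := by
  rw [weylGroup_eq]
  exact Subgroup.subset_closure ⟨a, ha, rfl⟩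

lemma IsRootSystem.reflIso_mem (hΦ : IsRootSystem Φ) {a b : V} (ha : a ∈ Φ) (hb : b ∈ Φ) :
    reflIso a b ∈ Φ := by
  rw [reflIso_apply]
  exact hΦ.refl_mem a ha b hb

lemma IsRootSystem.neg_mem (hΦ : IsRootSystem Φ) {a : V} (ha : a ∈ Φ) : -a ∈ Φ := by
  rw [← reflIso_self]
  exact hΦ.reflIso_mem ha ha

lemma IsRootSystem.weyl_mem_iff (hΦ : IsRootSystem Φ) {w : V ≃ₗᵢ[ℝ] V} (hw : w ∈ WeylGroup Φ) :
    ∀ b, w b ∈ Φ ↔ b ∈ Φ := by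
  rw [weylGroup_eq] at hw
  induction hw using Subgroup.closure_induction with
  | mem w h =>
    obtain ⟨a, ha, rfl⟩ := h
    intro b
    refine ⟨fun h => ?_, hΦ.reflIso_mem ha⟩
    have := hΦ.reflIso_mem ha h
    rwa [← Function.comp_apply (f := reflIso a), ← LinearIsometryEquiv.coe_mul,
      reflIso_mul_self] at this
  | one => exact fun b => Iff.rfl
  | mul x y _ _ hx hy => exact fun b => (hx (y b)).trans (hy b)
  | inv x _ hx =>
    intro b
    rw [← hx (x⁻¹ b)]
    exact iff_of_eq (congrArg (· ∈ Φ) (x.apply_symm_apply b))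

/-! ### Simple systems with a height vector -/

/-- A family of roots such that every root is an integral combination of it with coefficients of
one sign, together with a vector `x` whose inner product with a root is the sum of these
coefficients, that is, the height. Linear independence is not required. -/
structure SimpleSystem (Φ : Set V) {n : ℕ} (α : Fin n → V) (x : V) : Prop where
  mem : ∀ i, α i ∈ Φ
  height : ∀ i, ⟪α i, x⟫ = 1
  comb : ∀ β ∈ Φ, ∃ c : Fin n → ℤ,
    β = ∑ i, (c i : ℝ) • α i ∧ ((∀ i, 0 ≤ c i) ∨ (∀ i, c i ≤ 0))

variable {n : ℕ} {α α' : Fin n → V} {x y : V}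

lemma SimpleSystem.inner_eq (h : SimpleSystem Φ α x) (c : Fin n → ℤ) :
    ⟪∑ i, (c i : ℝ) • α i, x⟫ = ((∑ i, c i : ℤ) : ℝ) := by
  simp [sum_inner, real_inner_smul_left, h.height]

lemma SimpleSystem.cases (hΦ : IsRootSystem Φ) (h : SimpleSystem Φ α x) {β : V} (hβ : β ∈ Φ) :
    ∃ c : Fin n → ℤ, β = ∑ i, (c i : ℝ) • α i ∧ ⟪β, x⟫ = ((∑ i, c i : ℤ) : ℝ) ∧
      (((∀ i, 0 ≤ c i) ∧ 1 ≤ ⟪β, x⟫) ∨ ((∀ i, c i ≤ 0) ∧ ⟪β, x⟫ ≤ -1)) := by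
  obtain ⟨c, hc, hs⟩ := h.comb β hβ
  have hi : ⟪β, x⟫ = ((∑ i, c i : ℤ) : ℝ) := by rw [hc, h.inner_eq]
  have h0 : ∃ i, c i ≠ 0 := by
    by_contra! h0
    apply hΦ.not_zero
    have : β = 0 := by simp [hc, h0]
    rwa [← this]
  obtain ⟨i, hi0⟩ := h0
  refine ⟨c, hc, hi, ?_⟩
  rcases hs with hs | hs
  · left
    refine ⟨hs, ?_⟩
    have : c i ≤ ∑ i, c i := Finset.single_le_sum (fun i _ => hs i) (Finset.mem_univ i)
    have h1 : 1 ≤ ∑ i, c i := by have := hs i; omega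
    rw [hi]; exact_mod_cast h1
  · right
    refine ⟨hs, ?_⟩
    have : -c i ≤ ∑ i, -c i :=
      Finset.single_le_sum (f := fun i => -c i) (fun i _ => by simpa using hs i) (Finset.mem_univ i)
    rw [Finset.sum_neg_distrib] at this
    have h1 : ∑ i, c i ≤ -1 := by have := hs i; omega
    rw [hi]; exact_mod_cast h1

/-- A root that is positive at some point of the closed chamber is a positive root. -/
lemma SimpleSystem.pos_of_pos (hΦ : IsRootSystem Φ) (h : SimpleSystem Φ α x) {z : V}
    (hz : ∀ i, 0 ≤ ⟪α i, z⟫) {β : V} (hβ : β ∈ Φ) (hβz : 0 < ⟪β, z⟫) : 1 ≤ ⟪β, x⟫ := by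
  obtain ⟨c, hc, -, hs⟩ := h.cases hΦ hβ
  rcases hs with hs | hs
  · exact hs.2
  · exfalso
    have : ⟪β, z⟫ ≤ 0 := by
      rw [hc, sum_inner]
      refine Finset.sum_nonpos fun i _ => ?_
      rw [real_inner_smul_left]
      exact mul_nonpos_of_nonpos_of_nonneg (by exact_mod_cast hs.1 i) (hz i)
    linarith

/-- Since a simple root has height one, it cannot be a sum of several positive roots; hence a
simple system is contained in every other one that defines the same positive roots. -/
lemma SimpleSystem.range_subset (hΦ : IsRootSystem Φ) (h : SimpleSystem Φ α x)
    (h' : SimpleSystem Φ α' y) (hαy : ∀ i, 0 < ⟪α i, y⟫) : Set.range α ⊆ Set.range α' := by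
  have hx : ∀ i, 1 ≤ ⟪α' i, x⟫ := fun i =>
    h.pos_of_pos hΦ (fun k => (hαy k).le) (h'.mem i) (by rw [h'.height]; exact one_pos)
  rintro _ ⟨k, rfl⟩
  obtain ⟨d, hd, hdy, hs⟩ := h'.cases hΦ (h.mem k)
  have hd0 : ∀ i, 0 ≤ d i := by
    rcases hs with hs | hs
    · exact hs.1
    · have := hαy k
      linarith [hs.2]
  have hk1 : 1 ≤ ∑ i, d i := by
    have : (0 : ℝ) < ((∑ i, d i : ℤ) : ℝ) := by rw [← hdy]; exact hαy k
    have : 0 < ∑ i, d i := by exact_mod_cast this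
    omega
  have hk2 : ∑ i, d i ≤ 1 := by
    have : ((∑ i, d i : ℤ) : ℝ) ≤ 1 := by
      rw [← h.height k, hd, sum_inner]
      push_cast
      refine Finset.sum_le_sum fun i _ => ?_
      rw [real_inner_smul_left]
      exact le_mul_of_one_le_right (by exact_mod_cast hd0 i) (hx i)
    exact_mod_cast this
  have hi : ∃ i, d i ≠ 0 := by
    by_contra! h0
    simp [h0] at hk1
  obtain ⟨i, hi⟩ := hi
  have hsum := Finset.add_sum_erase Finset.univ d (Finset.mem_univ i)
  have hnn : ∀ l ∈ Finset.univ.erase i, 0 ≤ d l := fun l _ => hd0 l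
  have hnn' := Finset.sum_nonneg hnn
  have hdi := hd0 i
  have hz : ∀ l ∈ Finset.univ.erase i, d l = 0 :=
    (Finset.sum_eq_zero_iff_of_nonneg hnn).1 (by omega)
  have hz0 : ∑ l ∈ Finset.univ.erase i, d l = 0 := Finset.sum_eq_zero hz
  refine ⟨i, ?_⟩
  rw [hd, Finset.sum_eq_single i]
  · have : d i = 1 := by omega
    simp [this]
  · intro l _ hl
    simp [hz l (by simp [hl])]
  · simp

lemma SimpleSystem.range_eq (hΦ : IsRootSystem Φ) (h : SimpleSystem Φ α x)
    (h' : SimpleSystem Φ α' y) (hαy : ∀ i, 0 < ⟪α i, y⟫) : Set.range α = Set.range α' :=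
  (h.range_subset hΦ h' hαy).antisymm <| h'.range_subset hΦ h fun i =>
    one_pos.trans_le <|
      h.pos_of_pos hΦ (fun k => (hαy k).le) (h'.mem i) (by rw [h'.height]; exact one_pos)

lemma SimpleSystem.map (hΦ : IsRootSystem Φ) (h : SimpleSystem Φ α x) {w : V ≃ₗᵢ[ℝ] V}
    (hw : w ∈ WeylGroup Φ) : SimpleSystem Φ (fun i => w (α i)) (w x) where
  mem i := (hΦ.weyl_mem_iff hw _).2 (h.mem i)
  height i := by rw [w.inner_map_map, h.height]
  comb β hβ := by
    obtain ⟨b, rfl⟩ := w.surjective β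
    obtain ⟨c, hc, hs⟩ := h.comb b ((hΦ.weyl_mem_iff hw _).1 hβ)
    refine ⟨c, ?_, hs⟩
    conv_lhs => rw [hc]
    simp

/-! ### Transitivity on simple systems -/

lemma IsRootSystem.finite_weylGroup (hΦ : IsRootSystem Φ) :
    (WeylGroup Φ : Set (V ≃ₗᵢ[ℝ] V)).Finite := by
  have := hΦ.finite.to_subtype
  let f : (V ≃ₗᵢ[ℝ] V) → Φ → V := fun w a => w a
  have hinj : Function.Injective f := by
    intro u v huv
    apply LinearIsometryEquiv.toLinearEquiv_injective
    apply LinearEquiv.toLinearMap_injective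
    exact LinearMap.ext_on hΦ.spans fun a ha => congrFun huv ⟨a, ha⟩
  refine Set.Finite.of_finite_image (f := f) ?_ hinj.injOn
  refine (Set.Finite.pi (fun _ : Φ => hΦ.finite)).subset ?_
  rintro _ ⟨w, hw, rfl⟩ a -
  exact (hΦ.weyl_mem_iff hw _).2 a.2

/-- The Weyl group is transitive on simple systems: move the height vector `y` of the second system
as far as possible in the direction of `x`; it then lies in the chamber of the first one. -/
lemma SimpleSystem.exists_weyl (hΦ : IsRootSystem Φ) (h : SimpleSystem Φ α x)
    (h' : SimpleSystem Φ α' y) :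
    ∃ v ∈ WeylGroup Φ, ⇑v '' Set.range α = Set.range α' := by
  obtain ⟨u, hu, hmax⟩ := Set.exists_max_image _ (fun u : V ≃ₗᵢ[ℝ] V => ⟪u y, x⟫)
    hΦ.finite_weylGroup ⟨1, one_mem _⟩
  have h'' := h'.map hΦ hu
  have hpos : ∀ i, 0 < ⟪α i, u y⟫ := by
    intro i
    have hne : ⟪α i, u y⟫ ≠ 0 := by
      obtain ⟨c, -, -, hc⟩ := h''.cases hΦ (h.mem i)
      rcases hc with hc | hc <;> intro h0 <;> linarith [hc.2]
    refine lt_of_le_of_ne ?_ hne.symm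
    have hm := hmax (reflIso (α i) * u) (mul_mem (reflIso_mem_weylGroup (h.mem i)) hu)
    have ha : 0 < ⟪α i, α i⟫ := real_inner_self_pos.2 fun h0 => hΦ.not_zero (h0 ▸ h.mem i)
    simp only [LinearIsometryEquiv.coe_mul, Function.comp_apply, reflIso_apply, reflMap,
      inner_sub_left, real_inner_smul_left, h.height, mul_one] at hm
    have h2 : 0 ≤ 2 * ⟪α i, u y⟫ / ⟪α i, α i⟫ := by linarith
    rw [le_div_iff₀ ha] at h2
    linarith
  refine ⟨u⁻¹, inv_mem hu, ?_⟩
  rw [h.range_eq hΦ h'' hpos, ← Set.range_comp]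
  exact congrArg Set.range (funext fun i => u.symm_apply_apply (α' i))

/-! ### Freeness on simple systems -/

/-- A simple reflection changes the sign of only one positive root. -/
lemma SimpleSystem.eq_simple (hΦ : IsRootSystem Φ) (h : SimpleSystem Φ α x)
    (hli : LinearIndependent ℝ α) {γ : V} (hγ : γ ∈ Φ) (hpos : 0 < ⟪γ, x⟫) (i : Fin n)
    (hneg : ⟪reflIso (α i) γ, x⟫ < 0) : γ = α i := by
  obtain ⟨c, hc, -, hcs⟩ := h.cases hΦ hγ
  obtain ⟨e, he, -, hes⟩ := h.cases hΦ (hΦ.reflIso_mem (h.mem i) hγ)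
  have hc0 : ∀ k, 0 ≤ c k := by
    rcases hcs with hcs | hcs
    · exact hcs.1
    · linarith [hcs.2]
  have he0 : ∀ k, e k ≤ 0 := by
    rcases hes with hes | hes
    · linarith [hes.2]
    · exact hes.1
  set t : ℝ := 2 * ⟪α i, γ⟫ / ⟪α i, α i⟫ with ht
  have hsum : ∑ k, ((e k : ℝ) - c k + if k = i then t else 0) • α k = 0 := by
    simp only [add_smul, sub_smul, Finset.sum_add_distrib, Finset.sum_sub_distrib, ite_smul,
      zero_smul, Finset.sum_ite_eq', Finset.mem_univ, if_true]
    rw [← he, ← hc, reflIso_apply, reflMap, ← ht]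
    abel
  have hk := Fintype.linearIndependent_iff.1 hli _ hsum
  have hck : ∀ k, k ≠ i → c k = 0 := by
    intro k hki
    have := hk k
    rw [if_neg hki, add_zero, sub_eq_zero] at this
    have : e k = c k := by exact_mod_cast this
    have h1 := hc0 k
    have h2 := he0 k
    omega
  have hγi : γ = (c i : ℝ) • α i := by
    conv_lhs => rw [hc]
    refine Finset.sum_eq_single i (fun k _ hki => by simp [hck k hki]) (by simp)
  rcases hΦ.reduced _ (h.mem i) (c i) (hγi ▸ hγ) with h1 | h1
  · rw [hγi, h1, one_smul]
  · have : c i = -1 := by exact_mod_cast h1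
    have := hc0 i
    omega

/-- The product of simple reflections attached to a word in the simple roots. -/
noncomputable def wordProd (α : Fin n → V) (l : List (Fin n)) : V ≃ₗᵢ[ℝ] V :=
  (l.map fun i => reflIso (α i)).prod

lemma wordProd_nil : wordProd α [] = 1 := rfl

lemma wordProd_cons (i : Fin n) (l : List (Fin n)) :
    wordProd α (i :: l) = reflIso (α i) * wordProd α l := by
  simp [wordProd]

lemma wordProd_append (l l' : List (Fin n)) :
    wordProd α (l ++ l') = wordProd α l * wordProd α l' := by
  simp [wordProd]

lemma wordProd_reverse (l : List (Fin n)) : wordProd α l.reverse = (wordProd α l)⁻¹ := by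
  induction l with
  | nil => simp [wordProd_nil]
  | cons i l ih =>
    rw [List.reverse_cons, wordProd_append, ih, wordProd_cons, wordProd_cons, wordProd_nil,
      mul_one, mul_inv_rev, inv_eq_of_mul_eq_one_left (reflIso_mul_self (α i))]

lemma SimpleSystem.wordProd_mem (h : SimpleSystem Φ α x) (l : List (Fin n)) :
    wordProd α l ∈ WeylGroup Φ := by
  induction l with
  | nil => exact one_mem _
  | cons i l ih =>
    rw [wordProd_cons]
    exact mul_mem (reflIso_mem_weylGroup (h.mem i)) ih

/-- The reflection in a positive root is a product of simple reflections, by induction on the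
height of the root. -/
lemma SimpleSystem.reflIso_eq_wordProd (hΦ : IsRootSystem Φ) (h : SimpleSystem Φ α x)
    (hli : LinearIndependent ℝ α) (N : ℕ) :
    ∀ β ∈ Φ, 0 < ⟪β, x⟫ → ⟪β, x⟫ ≤ N → ∃ l, wordProd α l = reflIso β := by
  induction N with
  | zero =>
    intro β _ h1 h2
    norm_num at h2
    linarith
  | succ N ih =>
    intro β hβ h1 h2
    obtain ⟨c, hc, -, hs⟩ := h.cases hΦ hβ
    have hc0 : ∀ k, 0 ≤ c k := by
      rcases hs with hs | hs
      · exact hs.1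
      · linarith [hs.2]
    have hββ : 0 < ⟪β, β⟫ := real_inner_self_pos.2 fun h0 => hΦ.not_zero (h0 ▸ hβ)
    -- As `⟪β, β⟫ > 0`, some simple root makes an acute angle with `β`.
    have hi : ∃ i, 0 < ⟪α i, β⟫ := by
      by_contra! hcon
      have : ⟪β, β⟫ ≤ 0 := by
        nth_rewrite 1 [hc]
        rw [sum_inner]
        refine Finset.sum_nonpos fun i _ => ?_
        rw [real_inner_smul_left]
        exact mul_nonpos_of_nonneg_of_nonpos (by exact_mod_cast hc0 i) (hcon i)
      linarith
    obtain ⟨i, hi⟩ := hi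
    by_cases hβi : β = α i
    · exact ⟨[i], by rw [wordProd_cons, wordProd_nil, mul_one, hβi]⟩
    have hγ : reflIso (α i) β ∈ Φ := hΦ.reflIso_mem (h.mem i) hβ
    have hγpos : 0 < ⟪reflIso (α i) β, x⟫ := by
      obtain ⟨_, -, -, hs⟩ := h.cases hΦ hγ
      rcases hs with hs | hs
      · linarith [hs.2]
      · exact absurd (h.eq_simple hΦ hli hβ h1 i (by linarith [hs.2])) hβi
    have hγle : ⟪reflIso (α i) β, x⟫ ≤ N := by
      obtain ⟨k, hk⟩ := hΦ.crystallographic _ (h.mem i) _ hβ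
      have ha : 0 < ⟪α i, α i⟫ := real_inner_self_pos.2 fun h0 => hΦ.not_zero (h0 ▸ h.mem i)
      have hk0 : (0 : ℝ) < k := by rw [← hk]; positivity
      have hk1 : (1 : ℝ) ≤ k := by
        have : 0 < k := by exact_mod_cast hk0
        exact_mod_cast this
      rw [reflIso_apply, reflMap, hk, inner_sub_left, real_inner_smul_left, h.height]
      push_cast at h2
      linarith
    obtain ⟨l, hl⟩ := ih _ hγ hγpos hγle
    refine ⟨i :: (l ++ [i]), ?_⟩
    have hinv := inv_eq_of_mul_eq_one_left (reflIso_mul_self (α i))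
    rw [reflIso_map, hinv] at hl
    rw [wordProd_cons, wordProd_append, hl, wordProd_cons, wordProd_nil, mul_one]
    calc _ = (reflIso (α i) * reflIso (α i)) * reflIso β * (reflIso (α i) * reflIso (α i)) := by
          simp only [mul_assoc]
      _ = reflIso β := by rw [reflIso_mul_self, one_mul, mul_one]

lemma SimpleSystem.exists_wordProd (hΦ : IsRootSystem Φ) (h : SimpleSystem Φ α x)
    (hli : LinearIndependent ℝ α) {w : V ≃ₗᵢ[ℝ] V} (hw : w ∈ WeylGroup Φ) :
    ∃ l, wordProd α l = w := by
  rw [weylGroup_eq] at hw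
  induction hw using Subgroup.closure_induction with
  | mem w hw =>
    obtain ⟨β, hβ, rfl⟩ := hw
    obtain ⟨_, -, -, hs⟩ := h.cases hΦ hβ
    rcases hs with hs | hs
    · obtain ⟨N, hN⟩ := exists_nat_ge ⟪β, x⟫
      exact h.reflIso_eq_wordProd hΦ hli N β hβ (by linarith [hs.2]) hN
    · obtain ⟨N, hN⟩ := exists_nat_ge ⟪-β, x⟫
      rw [← reflIso_neg]
      exact h.reflIso_eq_wordProd hΦ hli N (-β) (hΦ.neg_mem hβ)
        (by rw [inner_neg_left]; linarith [hs.2]) hN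
  | one => exact ⟨[], rfl⟩
  | mul _ _ _ _ h1 h2 =>
    obtain ⟨l1, rfl⟩ := h1
    obtain ⟨l2, rfl⟩ := h2
    exact ⟨l1 ++ l2, wordProd_append _ _⟩
  | inv _ _ h1 =>
    obtain ⟨l1, rfl⟩ := h1
    exact ⟨l1.reverse, wordProd_reverse _⟩

/-- The exchange condition: if a word sends `α i` to a negative root, then multiplying by the
reflection in `α i` amounts to deleting one letter, namely the one that changes the sign. -/
lemma SimpleSystem.exchange (hΦ : IsRootSystem Φ) (h : SimpleSystem Φ α x)
    (hli : LinearIndependent ℝ α) (i : Fin n) (l : List (Fin n))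
    (hneg : ⟪wordProd α l (α i), x⟫ < 0) :
    ∃ l' : List (Fin n), l'.length + 1 = l.length ∧
      wordProd α l * reflIso (α i) = wordProd α l' := by
  induction l with
  | nil =>
    rw [wordProd_nil, LinearIsometryEquiv.coe_one, id_eq, h.height] at hneg
    linarith
  | cons a t ih =>
    have hγ : wordProd α t (α i) ∈ Φ := (hΦ.weyl_mem_iff (h.wordProd_mem t) _).2 (h.mem i)
    by_cases hlt : ⟪wordProd α t (α i), x⟫ < 0
    · obtain ⟨t', hlen, ht'⟩ := ih hlt
      exact ⟨a :: t', by simp [hlen], by rw [wordProd_cons, wordProd_cons, mul_assoc, ht']⟩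
    · have hpos : 0 < ⟪wordProd α t (α i), x⟫ := by
        obtain ⟨_, -, -, hs⟩ := h.cases hΦ hγ
        rcases hs with hs | hs <;> linarith [hs.2]
      rw [wordProd_cons] at hneg
      have heq := h.eq_simple hΦ hli hγ hpos a hneg
      refine ⟨t, by simp, ?_⟩
      rw [wordProd_cons, ← heq, reflIso_map, inv_mul_cancel_right, mul_assoc, reflIso_mul_self,
        mul_one]

lemma SimpleSystem.wordProd_eq_one (hΦ : IsRootSystem Φ) (h : SimpleSystem Φ α x)
    (hli : LinearIndependent ℝ α) (N : ℕ) :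
    ∀ l : List (Fin n), l.length ≤ N → (∀ i, 0 < ⟪wordProd α l (α i), x⟫) →
      wordProd α l = 1 := by
  induction N with
  | zero =>
    intro l hl _
    rw [List.length_eq_zero_iff.1 (Nat.le_zero.1 hl), wordProd_nil]
  | succ N ih =>
    intro l hl hpos
    rcases List.eq_nil_or_concat' l with rfl | ⟨t, i, rfl⟩
    · rfl
    · have hw : wordProd α (t ++ [i]) = wordProd α t * reflIso (α i) := by
        rw [wordProd_append, wordProd_cons, wordProd_nil, mul_one]
      have hneg : ⟪wordProd α t (α i), x⟫ < 0 := by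
        have := hpos i
        rw [hw, LinearIsometryEquiv.coe_mul, Function.comp_apply, reflIso_self, map_neg,
          inner_neg_left] at this
        linarith
      obtain ⟨t', hlen, ht'⟩ := h.exchange hΦ hli i t hneg
      rw [hw, ht'] at hpos ⊢
      refine ih t' ?_ hpos
      simp only [List.length_append, List.length_singleton] at hl
      omega

/-- An element of the Weyl group that preserves a base is trivial. -/
lemma SimpleSystem.eq_one (hΦ : IsRootSystem Φ) (h : SimpleSystem Φ α x)
    (hli : LinearIndependent ℝ α) {w : V ≃ₗᵢ[ℝ] V} (hw : w ∈ WeylGroup Φ)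
    (hwα : ⇑w '' Set.range α = Set.range α) : w = 1 := by
  obtain ⟨l, rfl⟩ := h.exists_wordProd hΦ hli hw
  refine h.wordProd_eq_one hΦ hli l.length l le_rfl fun i => ?_
  obtain ⟨k, hk⟩ : wordProd α l (α i) ∈ Set.range α :=
    hwα ▸ Set.mem_image_of_mem _ (Set.mem_range_self i)
  rw [← hk, h.height]
  exact one_pos

/-! ### The base `Π` and the simple system `Π_j` -/

lemma IsBase.exists_inner_eq [FiniteDimensional ℝ V] (hα : IsBase Φ α) (f : Fin n → ℝ) :
    ∃ x : V, ∀ i, ⟪α i, x⟫ = f i := by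
  let b := Module.Basis.mk hα.indep hα.spans.ge
  let φ : V →ₗ[ℝ] ℝ := b.constr ℝ f
  refine ⟨(InnerProductSpace.toDual ℝ V).symm (LinearMap.toContinuousLinearMap φ), fun i => ?_⟩
  rw [real_inner_comm, InnerProductSpace.toDual_symm_apply]
  have : b i = α i := Module.Basis.mk_apply _ _ i
  rw [← this]
  exact b.constr_basis ℝ f i

lemma IsBase.exists_simpleSystem [FiniteDimensional ℝ V] (hα : IsBase Φ α) :
    ∃ x, SimpleSystem Φ α x := by
  obtain ⟨x, hx⟩ := hα.exists_inner_eq fun _ => 1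
  exact ⟨x, hα.mem, hx, hα.int_comb⟩

variable {m : Fin n → ℕ} {α₀ : V} {j : Fin n}

/-- A combination of `Π`, rewritten in terms of `Π_j`. -/
lemma IsHighestRoot.sum_update (h₀ : IsHighestRoot Φ α m α₀) (hj : m j = 1) (c : Fin n → ℝ) :
    ∑ i, c i • α i =
      ∑ i, (if i = j then -c j else c i - c j * m i) • Function.update α j (-α₀) i := by
  have h1 : ∀ i, (if i = j then -c j else c i - c j * m i) • Function.update α j (-α₀) i =
      (c i - c j * m i) • α i + if i = j then c j • α₀ else 0 := by
    intro i
    by_cases hi : i = j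
    · subst hi
      simp [hj]
    · simp [hi]
  rw [Finset.sum_congr rfl fun i _ => h1 i, Finset.sum_add_distrib]
  simp only [Finset.sum_ite_eq', Finset.mem_univ, if_true, sub_smul, Finset.sum_sub_distrib,
    mul_smul, ← Finset.smul_sum, ← h₀.eq, sub_add_cancel]

/-- Because `m j = 1`, the coefficient of a root at `α j` is `-1`, `0` or `1`. In each of these
cases the coefficients with respect to `Π_j` have constant sign by maximality of `α₀`. -/
lemma IsHighestRoot.exists_simpleSystem [FiniteDimensional ℝ V] (hΦ : IsRootSystem Φ)
    (hα : IsBase Φ α) (h₀ : IsHighestRoot Φ α m α₀) (hj : m j = 1) :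
    ∃ y, SimpleSystem Φ (Function.update α j (-α₀)) y := by
  obtain ⟨y, hy⟩ := hα.exists_inner_eq fun i =>
    if i = j then -1 - ∑ k ∈ Finset.univ.erase j, (m k : ℝ) else 1
  refine ⟨y, ?_, ?_, ?_⟩
  · intro i
    by_cases hi : i = j
    · subst hi
      simpa using hΦ.neg_mem h₀.mem
    · simpa [hi] using hα.mem i
  · intro i
    by_cases hi : i = j
    · subst hi
      have he : ∑ k ∈ Finset.univ.erase i, (m k : ℝ) * ⟪α k, y⟫ =
          ∑ k ∈ Finset.univ.erase i, (m k : ℝ) :=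
        Finset.sum_congr rfl fun k hk => by simp [hy, Finset.ne_of_mem_erase hk]
      rw [Function.update_self, inner_neg_left, h₀.eq, sum_inner]
      simp only [real_inner_smul_left]
      rw [← Finset.add_sum_erase _ _ (Finset.mem_univ i), he, hy, hj]
      simp
    · simp [hi, hy]
  · intro β hβ
    obtain ⟨c, hc, hs⟩ := hα.int_comb β hβ
    refine ⟨fun i => if i = j then -c j else c i - c j * m i, ?_, ?_⟩
    · rw [hc, h₀.sum_update hj]
      refine Finset.sum_congr rfl fun i _ => ?_
      congr 1
      by_cases hi : i = j <;> simp [hi]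
    · have hup := h₀.highest β hβ c hc
      have hlo := h₀.highest (-β) (hΦ.neg_mem hβ) (fun i => -c i) (by simp [hc])
      have hu := hup j
      have hl := hlo j
      have hcj : c j = -1 ∨ c j = 0 ∨ c j = 1 := by
        rw [hj] at hu hl
        push_cast at hu hl
        omega
      rcases hcj with hcj | hcj | hcj
      · left
        intro i
        have := hlo i
        simp only [hcj]
        split_ifs <;> omega
      · rcases hs with hs | hs
        · left
          intro i
          have := hs i
          simp only [hcj]
          split_ifs <;> omega
        · right
          intro i
          have := hs i
          simp only [hcj]
          split_ifs <;> omega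
      · right
        intro i
        have := hup i
        simp only [hcj]
        split_ifs <;> omega

/-- An element of the Weyl group carrying `Π` to `Π_j` carries the highest root `α₀` of `Π` to
`-α j`, which has the coefficients `m` with respect to `Π_j` and so is the highest root there. -/
lemma IsHighestRoot.map_eq (hΦ : IsRootSystem Φ) (hα : IsBase Φ α)
    (h₀ : IsHighestRoot Φ α m α₀) (hj : m j = 1) {v : V ≃ₗᵢ[ℝ] V} (hv : v ∈ WeylGroup Φ)
    (h : ⇑v '' Set.range α = Set.range (Function.update α j (-α₀))) : v (-α₀) = α j := by
  have hmem : ∀ i, ∃ k, Function.update α j (-α₀) k = v (α i) := fun i =>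
    Set.mem_range.1 (h ▸ Set.mem_image_of_mem _ (Set.mem_range_self i))
  choose σ hσ using hmem
  have hinj : Function.Injective σ := by
    intro i k hik
    apply hα.indep.injective
    apply v.injective
    rw [← hσ, ← hσ, hik]
  have hbij : Function.Bijective σ := Finite.injective_iff_bijective.1 hinj
  have hαj : -α j = ∑ k, (m k : ℝ) • Function.update α j (-α₀) k := by
    have := h₀.sum_update hj fun i => if i = j then (-1 : ℝ) else 0
    simp only [ite_smul, neg_smul, one_smul, zero_smul, Finset.sum_ite_eq', Finset.mem_univ,
      if_true] at this
    rw [this]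
    refine Finset.sum_congr rfl fun k _ => ?_
    by_cases hk : k = j
    · subst hk
      simp [hj]
    · simp [hk]
  have hαj' : -α j = v (∑ i, (m (σ i) : ℝ) • α i) := by
    rw [hαj, ← (Equiv.ofBijective σ hbij).sum_comp]
    simp [hσ]
  have hroot : ∑ i, (m (σ i) : ℝ) • α i ∈ Φ := by
    rw [← hΦ.weyl_mem_iff hv, ← hαj']
    exact hΦ.neg_mem (hα.mem j)
  have hle : ∀ i ∈ Finset.univ, m (σ i) ≤ m i := by
    intro i _
    have := h₀.highest _ hroot (fun i => (m (σ i) : ℤ)) (by simp) i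
    exact_mod_cast this
  -- A permutation that decreases `m` pointwise preserves it, since the total sum is unchanged.
  have heq := (Finset.sum_eq_sum_iff_of_le hle).1 ((Equiv.ofBijective σ hbij).sum_comp m)
  have hsum : ∑ i, (m (σ i) : ℝ) • α i = α₀ := by
    rw [h₀.eq]
    exact Finset.sum_congr rfl fun i hi => by rw [heq i hi]
  rw [hsum] at hαj'
  rw [map_neg, ← hαj', neg_neg]

end Aux

theorem statement_2
    {V : Type*} [NormedAddCommGroup V] [InnerProductSpace ℝ V] [FiniteDimensional ℝ V]
    (Φ : Set V) (hΦ : IsRootSystem Φ)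
    {n : ℕ} (α : Fin n → V) (hα : IsBase Φ α)
    (m : Fin n → ℕ) (α₀ : V) (h₀ : IsHighestRoot Φ α m α₀)
    (j : Fin n) (hj : m j = 1) :
    (∃! v : V ≃ₗᵢ[ℝ] V, v ∈ WeylGroup Φ ∧
      ⇑v '' Set.range α = Set.range (Function.update α j (-α₀))) ∧
    (∀ v : V ≃ₗᵢ[ℝ] V, v ∈ WeylGroup Φ →
      (⇑v '' Set.range α = Set.range (Function.update α j (-α₀)) ↔
        (⇑v '' insert (-α₀) (Set.range α) = insert (-α₀) (Set.range α) ∧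
          v (-α₀) = α j))) := by
  obtain ⟨x, hx⟩ := hα.exists_simpleSystem
  obtain ⟨y, hy⟩ := h₀.exists_simpleSystem hΦ hα hj
  refine ⟨?_, ?_⟩
  · obtain ⟨v, hv, hvα⟩ := hx.exists_weyl hΦ hy
    refine ⟨v, ⟨hv, hvα⟩, ?_⟩
    rintro w ⟨hw, hwα⟩
    have h1 : v⁻¹ * w = 1 := by
      refine hx.eq_one hΦ hα.indep (mul_mem (inv_mem hv) hw) ?_
      rw [LinearIsometryEquiv.coe_mul, Set.image_comp, hwα, ← hvα, ← Set.image_comp,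
        ← LinearIsometryEquiv.coe_mul, inv_mul_cancel, LinearIsometryEquiv.coe_one, Set.image_id]
    exact (inv_mul_eq_one.1 h1).symm
  · intro v hv
    have hrange : Set.range (Function.update α j (-α₀)) = insert (-α₀) (α '' {j}ᶜ) := by
      ext z
      constructor
      · rintro ⟨i, rfl⟩
        by_cases hi : i = j
        · subst hi
          simp
        · exact Or.inr ⟨i, hi, by simp [hi]⟩
      · rintro (rfl | ⟨i, hi, rfl⟩)
        · exact ⟨j, by simp⟩
        · exact ⟨i, Function.update_of_ne hi _ _⟩
    have hrange' : Set.range α = insert (α j) (α '' {j}ᶜ) := by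
      rw [← Set.image_insert_eq, ← Set.image_univ]
      congr 1
      ext i
      simp [em]
    have hneg : ∀ i, -α₀ ≠ α i := by
      intro i hi
      have h1 := hx.height i
      rw [← hi, inner_neg_left, h₀.eq, sum_inner] at h1
      have h2 : 0 ≤ ∑ k, ⟪(m k : ℝ) • α k, x⟫ := Finset.sum_nonneg fun k _ => by
        rw [real_inner_smul_left, hx.height]
        positivity
      linarith
    constructor
    · intro h
      have hvj := h₀.map_eq hΦ hα hj hv h
      refine ⟨?_, hvj⟩
      rw [Set.image_insert_eq, hvj, h, hrange, hrange', Set.insert_comm]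
    · rintro ⟨h, hvj⟩
      rw [Set.image_insert_eq, hvj, hrange', Set.insert_comm, ← hrange', ← hrange] at h
      -- Both sides arise from the extended base by deleting `α j`.
      have hn1 : α j ∉ ⇑v '' Set.range α := by
        rintro ⟨_, ⟨i, rfl⟩, hi⟩
        exact hneg i (v.injective (hvj.trans hi.symm))
      have hn2 : α j ∉ Set.range (Function.update α j (-α₀)) := by
        rw [hrange]
        rintro (h1 | ⟨i, hi, h1⟩)
        · exact hneg j h1.symm
        · exact hi (hα.indep.injective h1)
      rw [← Set.insert_sdiff_self_of_notMem hn1, h, Set.insert_sdiff_self_of_notMem hn2]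
end

section
/- For every minuscule simple root α_j we have v_j(A) = A − ϖ_j^∨ = {x − ϖ_j^∨ : x ∈ A}; that is, the image of the fundamental alcove under v_j is the translate of A by −ϖ_j^∨. -/
/-!
Pairing with the simple roots and with `α₀` turns both sides into systems of linear inequalities.
A point `y` lies in `v_j(A)` iff `⟪α_i, y⟫ ≥ 0` for `i ≠ j`, `⟪α₀, y⟫ ≤ 0` and `⟪v_j α₀, y⟫ ≤ 1`;
it lies in `A - ϖ_j` iff `⟪α_i, y⟫ ≥ 0` for `i ≠ j`, `⟪α_j, y⟫ ≥ -1` and `⟪α₀, y⟫ ≤ 1 - m_j = 0`.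
These agree as soon as `v_j α₀ = -α_j` (`map_highest_eq_neg`). To see this, write
`-α_j = -α₀ + ∑_{i ≠ j} m_i α_i`, a combination of `v_j(Π)`. Pulling back by `v_j`, the root
`v_j⁻¹(-α_j)` has simple-root coefficients that are a permutation of the `m_i`. Each of them is
bounded by the corresponding coefficient of the highest root, and the two coefficient families have
the same sum, so they coincide.
-/

open scoped RealInnerProductSpace

open scoped RealInnerProductSpace

theorem weylGroup_map_mem {V : Type*} [NormedAddCommGroup V] [InnerProductSpace ℝ V]
    {Φ : Set V} (hΦ : IsRootSystem Φ) {w : V ≃ₗᵢ[ℝ] V} (hw : w ∈ WeylGroup Φ) :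
    ∀ β ∈ Φ, w β ∈ Φ := by
  have refl_self_inv : ∀ a x : V, reflMap a (reflMap a x) = x := by
    intro a x
    by_cases ha : a = 0
    · simp [reflMap, ha]
    have h : ⟪a, a⟫ ≠ 0 := by simpa using ha
    simp only [reflMap, inner_sub_right, inner_smul_right]
    rw [sub_sub, ← add_smul]
    have : 2 * ⟪a, x⟫ / ⟪a, a⟫ +
        2 * (⟪a, x⟫ - 2 * ⟪a, x⟫ / ⟪a, a⟫ * ⟪a, a⟫) / ⟪a, a⟫ = 0 := by
      field_simp
      ring
    rw [this, zero_smul, sub_zero]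
  induction hw using Subgroup.closure_induction'' with
  | mem w hw =>
    obtain ⟨a, ha, h⟩ := hw
    intro β hβ
    rw [h]
    exact hΦ.refl_mem a ha β hβ
  | inv_mem w hw =>
    obtain ⟨a, ha, h⟩ := hw
    intro β hβ
    have : w⁻¹ β = reflMap a β := by
      apply w.injective
      rw [h (reflMap a β), refl_self_inv]
      exact w.apply_symm_apply β
    rw [this]
    exact hΦ.refl_mem a ha β hβ
  | one => exact fun β hβ => hβ
  | mul x y _ _ hx hy => exact fun β hβ => hx _ (hy β hβ)

theorem neg_mem_of_isRootSystem {V : Type*} [NormedAddCommGroup V] [InnerProductSpace ℝ V]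
    {Φ : Set V} (hΦ : IsRootSystem Φ) {a : V} (ha : a ∈ Φ) : -a ∈ Φ := by
  have h0 : a ≠ 0 := fun h => hΦ.not_zero (h ▸ ha)
  have h : ⟪a, a⟫ ≠ 0 := by simpa using h0
  have h1 := hΦ.refl_mem a ha a ha
  have : reflMap a a = -a := by
    rw [reflMap, mul_div_assoc, div_self h, mul_one, two_smul]
    abel
  rwa [this] at h1

/-- If `m j = 1` and `v ∈ W` carries `Π` to `{-α₀} ∪ (Π ∖ {α_j})`, then `v` sends the highest
root to `-α_j`, which is the highest root relative to the base `v(Π)`. -/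
theorem map_highest_eq_neg
    {V : Type*} [NormedAddCommGroup V] [InnerProductSpace ℝ V]
    {Φ : Set V} (hΦ : IsRootSystem Φ)
    {n : ℕ} {α : Fin n → V} (hα : IsBase Φ α)
    {m : Fin n → ℕ} {α₀ : V} (h₀ : IsHighestRoot Φ α m α₀)
    {j : Fin n} (hj : m j = 1)
    {v : V ≃ₗᵢ[ℝ] V} (hv : v ∈ WeylGroup Φ)
    (hvPi : ⇑v '' Set.range α = Set.range (Function.update α j (-α₀))) :
    v α₀ = -α j := by
  have hτ : ∀ k, ∃ i, Function.update α j (-α₀) i = v (α k) := fun k =>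
    hvPi.subset ⟨α k, ⟨k, rfl⟩, rfl⟩
  choose τ hτ using hτ
  have τ_inj : Function.Injective τ := fun a b hab =>
    hα.indep.injective (v.injective (by rw [← hτ a, ← hτ b, hab]))
  let e : Fin n ≃ Fin n := Equiv.ofBijective τ (Finite.injective_iff_bijective.mp τ_inj)
  have v_sum : v (∑ k, (m (τ k) : ℝ) • α k) = -α j := by
    have h1 : v (∑ k, (m (τ k) : ℝ) • α k)
        = ∑ i, (m i : ℝ) • Function.update α j (-α₀) i := by
      rw [_root_.map_sum,
        ← Equiv.sum_comp e fun i => (m i : ℝ) • Function.update α j (-α₀) i]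
      refine Finset.sum_congr rfl fun k _ => ?_
      rw [map_smul, ← hτ k]
      rfl
    have h2 := h₀.eq
    rw [← Finset.add_sum_erase _ _ (Finset.mem_univ j)] at h2
    have h3 : ∑ i ∈ Finset.univ.erase j, (m i : ℝ) • Function.update α j (-α₀) i
        = ∑ i ∈ Finset.univ.erase j, (m i : ℝ) • α i :=
      Finset.sum_congr rfl fun i hi => by
        rw [Function.update_of_ne (Finset.ne_of_mem_erase hi)]
    rw [h1, ← Finset.add_sum_erase _ _ (Finset.mem_univ j), h3, Function.update_self, hj]
    rw [hj] at h2
    nth_rw 1 [h2]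
    rw [Nat.cast_one, one_smul, one_smul]
    abel
  have root : ∑ k, (m (τ k) : ℝ) • α k ∈ Φ := by
    have h := weylGroup_map_mem hΦ (inv_mem hv) _ (neg_mem_of_isRootSystem hΦ (hα.mem j))
    rw [← v_sum] at h
    exact (v.symm_apply_apply (∑ k, (m (τ k) : ℝ) • α k)) ▸ h
  have le : ∀ k ∈ Finset.univ, m (τ k) ≤ m k := fun k _ => by
    exact_mod_cast h₀.highest _ root (fun k => (m (τ k) : ℤ)) (by simp) k
  have eq := (Finset.sum_eq_sum_iff_of_le le).mp (Equiv.sum_comp e m)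
  rw [← v_sum, h₀.eq]
  congr 1
  exact Finset.sum_congr rfl fun k hk => by rw [eq k hk]

theorem statement_8
    {V : Type*} [NormedAddCommGroup V] [InnerProductSpace ℝ V] [FiniteDimensional ℝ V]
    (Φ : Set V) (hΦ : IsRootSystem Φ)
    {n : ℕ} (α : Fin n → V) (hα : IsBase Φ α)
    (m : Fin n → ℕ) (α₀ : V) (h₀ : IsHighestRoot Φ α m α₀)
    (ϖ : Fin n → V) (hϖ : ∀ i j, ⟪ϖ i, α j⟫ = if i = j then 1 else 0)
    (j : Fin n) (hj : m j = 1)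
    (vj : V ≃ₗᵢ[ℝ] V) (hvj : vj ∈ WeylGroup Φ)
    (hvjPi : ⇑vj '' Set.range α = Set.range (Function.update α j (-α₀))) :
    ⇑vj '' alcove α α₀ = (fun x : V => x - ϖ j) '' alcove α α₀ := by
  have top := map_highest_eq_neg hΦ hα h₀ hj hvj hvjPi
  have pair_α : ∀ i, ⟪α i, ϖ j⟫ = if j = i then 1 else 0 := fun i => by
    rw [real_inner_comm, hϖ]
  have pair_α₀ : ⟪α₀, ϖ j⟫ = 1 := by
    rw [h₀.eq, sum_inner]
    simp [inner_smul_left, pair_α, hj]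
  ext y
  have left : y ∈ ⇑vj '' alcove α α₀ ↔
      (∀ i, 0 ≤ ⟪Function.update α j (-α₀) i, y⟫) ∧ -1 ≤ ⟪α j, y⟫ := by
    have h1 : y ∈ ⇑vj '' alcove α α₀ ↔ (∀ i, 0 ≤ ⟪vj (α i), y⟫) ∧ ⟪vj α₀, y⟫ ≤ 1 := by
      constructor
      · rintro ⟨x, hx, rfl⟩
        simpa only [alcove, Set.mem_ofPred_eq, LinearIsometryEquiv.inner_map_map] using hx
      · intro h
        refine ⟨vj.symm y, ?_, vj.apply_symm_apply y⟩
        rw [← vj.apply_symm_apply y] at h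
        simpa only [alcove, Set.mem_ofPred_eq, LinearIsometryEquiv.inner_map_map] using h
    have h2 : (∀ i, 0 ≤ ⟪vj (α i), y⟫) ↔ ∀ i, 0 ≤ ⟪Function.update α j (-α₀) i, y⟫ := by
      rw [← Set.forall_mem_range (f := Function.update α j (-α₀)) (p := fun z => 0 ≤ ⟪z, y⟫),
        ← hvjPi, Set.forall_mem_image, Set.forall_mem_range]
    rw [h1, h2, top, inner_neg_left, neg_le]
  have right : y ∈ (fun x : V => x - ϖ j) '' alcove α α₀ ↔
      (∀ i, 0 ≤ ⟪α i, y + ϖ j⟫) ∧ ⟪α₀, y + ϖ j⟫ ≤ 1 := by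
    constructor
    · rintro ⟨x, hx, rfl⟩
      simpa only [alcove, Set.mem_ofPred_eq, sub_add_cancel] using hx
    · exact fun h => ⟨y + ϖ j, h, add_sub_cancel_right y (ϖ j)⟩
  rw [left, right]
  simp only [inner_add_right, pair_α, pair_α₀]
  constructor
  · rintro ⟨h, hy⟩
    refine ⟨fun i => ?_, ?_⟩
    · by_cases hi : j = i
      · subst hi
        rw [if_pos rfl]
        linarith
      · have := h i
        rw [Function.update_of_ne (Ne.symm hi)] at this
        rwa [if_neg hi, add_zero]
    · have := h j
      rw [Function.update_self, inner_neg_left] at this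
      linarith
  · rintro ⟨h, hy⟩
    refine ⟨fun i => ?_, ?_⟩
    · by_cases hi : j = i
      · subst hi
        rw [Function.update_self, inner_neg_left]
        linarith
      · have := h i
        rw [if_neg hi, add_zero] at this
        rwa [Function.update_of_ne (Ne.symm hi)]
    · have := h j
      rw [if_pos rfl] at this
      linarith
end
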